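/- Let (F^1,…,F^N) be a vector potential of a conformal flat F-manifold on M with Euler vector field E; set C_γ := (c^α_{γβ})_{α,β} and 𝒰 := (E^μ c^α_{μβ})_{α,β}. Then the following matrix identities hold on M: C_β C_γ = C_γ C_β, ∂C_β/∂t^γ = ∂C_γ/∂t^β, [𝒰, C_β] = 0, and ∂𝒰/∂t^β = C_β − [Q, C_β] for all 1 ≤ β,γ ≤ N. Equivalently, for every λ ∈ ℂ the connection ∇̃^λ on M×ℂ*, whose flat sections are row vectors ζ(t,z) satisfying ∂ζ/∂t^β = z ζ C_β and ∂ζ/∂z = ζ(𝒰 + (λ−Q)/z), is flat. -/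

import Mathlib

/-!
The commutation `C_β C_γ = C_γ C_β` is the associativity equation of the potential read as a matrix
product, and `𝒰 = ∑ E^μ C_μ` then commutes with every `C_β`. Closedness of `C` is the symmetry of
second derivatives applied to `∂F^α/∂t^δ`. For the derivative of `𝒰`, differentiating the
homogeneity equation of `F^α` along `t^δ` gives, on `M`,
`𝒰^α_δ = (1 - q^α + q^δ) ∂F^α/∂t^δ + A^α_δ`;
one further differentiation along `t^β` gives
`∂𝒰^α_δ/∂t^β = (1 - q^α + q^δ) c^α_{βδ}`, which is the entry of `C_β - [Q, C_β]`.
-/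


/-!
STATEMENT 2: For a vector potential of a conformal flat F-manifold, with
`C_γ = (c^α_{γβ})` and `𝒰 = (E^μ c^α_{μβ})`, the matrix identities
`C_β C_γ = C_γ C_β`, `∂C_β/∂t^γ = ∂C_γ/∂t^β`, `[𝒰, C_β] = 0` and
`∂𝒰/∂t^β = C_β − [Q, C_β]` hold on M (equivalently, the connections ∇̃^λ are flat).
-/

noncomputable section

abbrev Pt (n : ℕ) := Fin n → ℂ
abbrev Fn (n : ℕ) := (Fin n → ℂ) → ℂ

noncomputable def pd {n : ℕ} (i : Fin n) (f : Fn n) : Fn n :=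
  fun x => fderiv ℂ f x (Pi.single i 1)

theorem analyticAt_pd {n : ℕ} (i : Fin n) {f : Fn n} {x : Pt n} (hf : AnalyticAt ℂ f x) :
    AnalyticAt ℂ (pd i f) x :=
  ((ContinuousLinearMap.apply ℂ ℂ (Pi.single i 1 : Pt n)).analyticAt _).comp hf.fderiv

theorem pd_comm {n : ℕ} (i j : Fin n) {f : Fn n} {x : Pt n} (hf : AnalyticAt ℂ f x) :
    pd i (pd j f) x = pd j (pd i f) x := by
  have key : ∀ a b : Fin n, pd a (pd b f) x
      = fderiv ℂ (fderiv ℂ f) x (Pi.single a 1) (Pi.single b 1) := by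
    intro a b
    have h := hf.fderiv.differentiableAt.hasFDerivAt.clm_apply
      (hasFDerivAt_const (Pi.single b 1 : Pt n) x)
    have h' : HasFDerivAt (pd b f) _ x := h
    change fderiv ℂ (pd b f) x (Pi.single a 1) = _
    rw [h'.fderiv]
    simp
  rw [key, key]
  have hs : IsSymmSndFDerivAt ℂ f x := (hf.contDiffAt (n := 2)).isSymmSndFDerivAt (by simp)
  exact hs _ _

theorem pd_congr {n : ℕ} (i : Fin n) {f g : Fn n} {M : Set (Pt n)} (hM : IsOpen M)
    (h : ∀ y ∈ M, f y = g y) {x : Pt n} (hx : x ∈ M) : pd i f x = pd i g x := by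
  have : f =ᶠ[nhds x] g := Filter.eventually_of_mem (hM.mem_nhds hx) h
  simp [pd, this.fderiv_eq]

theorem pd_add {n : ℕ} (i : Fin n) {f g : Fn n} {x : Pt n} (hf : DifferentiableAt ℂ f x)
    (hg : DifferentiableAt ℂ g x) : pd i (fun y => f y + g y) x = pd i f x + pd i g x := by
  simp [pd, fderiv_fun_add hf hg]

theorem pd_mul {n : ℕ} (i : Fin n) {f g : Fn n} {x : Pt n} (hf : DifferentiableAt ℂ f x)
    (hg : DifferentiableAt ℂ g x) :
    pd i (fun y => f y * g y) x = pd i f x * g x + f x * pd i g x := by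
  simp [pd, fderiv_fun_mul hf hg]; ring

theorem pd_sum {n : ℕ} (i : Fin n) {f : Fin n → Fn n} {x : Pt n}
    (hf : ∀ μ, DifferentiableAt ℂ (f μ) x) :
    pd i (fun y => ∑ μ, f μ y) x = ∑ μ, pd i (f μ) x := by
  simp [pd, fderiv_fun_sum fun μ _ => hf μ]

theorem pd_const {n : ℕ} (i : Fin n) (c : ℂ) (x : Pt n) : pd i (fun _ => c) x = 0 := by
  simp [pd]

theorem pd_coord {n : ℕ} (i μ : Fin n) (x : Pt n) :
    pd i (fun y => y μ) x = if μ = i then 1 else 0 := by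
  have h : HasFDerivAt (fun y : Pt n => y μ) (ContinuousLinearMap.proj (R := ℂ) μ) x :=
    hasFDerivAt_apply μ x
  simp [pd, h.fderiv, Pi.single_apply]

/-- If `f` has weight `2 - c` under the Euler field `E` up to an affine function, then contracting
its Hessian with `E` gives `1 - c + q δ` times `∂f/∂t^δ`, up to the constant `a δ`. For
`f = F^α` the left side is `𝒰^α_δ`. -/
theorem euler_pd {N : ℕ} {M : Set (Pt N)} (hM : IsOpen M) {f : Fn N}
    (hf : AnalyticOnNhd ℂ f M) (q r a : Fin N → ℂ) (c b : ℂ)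
    (h : ∀ x ∈ M, ∑ μ, ((1 - q μ) * x μ + r μ) * pd μ f x
      = (2 - c) * f x + (∑ β, a β * x β) + b)
    {x : Pt N} (hx : x ∈ M) (δ : Fin N) :
    ∑ μ, ((1 - q μ) * x μ + r μ) * pd μ (pd δ f) x = (1 - c + q δ) * pd δ f x + a δ := by
  have hd : DifferentiableAt ℂ f x := (hf x hx).differentiableAt
  have hp : ∀ μ, DifferentiableAt ℂ (pd μ f) x :=
    fun μ => (analyticAt_pd μ (hf x hx)).differentiableAt
  have hX : ∀ μ, DifferentiableAt ℂ (fun y : Pt N => y μ) x := fun μ => by fun_prop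
  have hL : ∀ μ, pd δ (fun y => ((1 - q μ) * y μ + r μ) * pd μ f y) x
      = (if μ = δ then (1 - q μ) * pd μ f x else 0)
        + ((1 - q μ) * x μ + r μ) * pd μ (pd δ f) x := by
    intro μ
    rw [pd_mul δ (by fun_prop) (hp μ), pd_add δ (by fun_prop) (by fun_prop),
      pd_mul δ (by fun_prop) (hX μ), pd_const, pd_const, pd_coord, pd_comm δ μ (hf x hx)]
    split_ifs <;> ring
  have hR : ∀ μ, pd δ (fun y => a μ * y μ) x = if μ = δ then a μ else 0 := by
    intro μ
    rw [pd_mul δ (by fun_prop) (hX μ), pd_const, pd_coord]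
    split_ifs <;> ring
  have key := pd_congr δ hM h hx
  rw [pd_sum (f := fun μ y => ((1 - q μ) * y μ + r μ) * pd μ f y) δ
      (fun μ => DifferentiableAt.fun_mul (by fun_prop) (hp μ)),
    pd_add δ ((hd.const_mul _).fun_add (by fun_prop)) (by fun_prop),
    pd_add δ (hd.const_mul _) (by fun_prop),
    pd_mul δ (by fun_prop) hd, pd_sum (f := fun μ y => a μ * y μ) δ (fun μ => by fun_prop), pd_const, pd_const] at key
  simp only [hL, hR, Finset.sum_add_distrib, Finset.sum_ite_eq',
    Finset.mem_univ, if_true] at key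
  linear_combination key

theorem stmt2 (N : ℕ) (hN : 0 < N)
    (M : Set (Pt N)) (hM : IsOpen M)
    -- vector potential of a flat F-manifold
    (F : Fin N → Fn N) (hFan : ∀ α, AnalyticOnNhd ℂ (F α) M)
    (hVP1 : ∀ x ∈ M, ∀ α β : Fin N,
      pd β (pd ⟨0, hN⟩ (F α)) x = if α = β then 1 else 0)
    (hVP2 : ∀ x ∈ M, ∀ α β γ δ' : Fin N,
      ∑ μ, pd β (pd μ (F α)) x * pd γ (pd δ' (F μ)) x =
      ∑ μ, pd γ (pd μ (F α)) x * pd β (pd δ' (F μ)) x)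
    -- conformality
    (q r : Fin N → ℂ) (hq1 : q ⟨0, hN⟩ = 0)
    (A : Matrix (Fin N) (Fin N) ℂ) (B : Fin N → ℂ)
    (hconf : ∀ x ∈ M, ∀ α : Fin N,
      ∑ μ, ((1 - q μ) * x μ + r μ) * pd μ (F α) x =
        (2 - q α) * F α x + (∑ β, A α β * x β) + B α)
    -- the matrices C_γ := (c^α_{γβ})_{α,β} and 𝒰 := (E^μ c^α_{μβ})_{α,β}
    (Cm : Fin N → Pt N → Matrix (Fin N) (Fin N) ℂ)
    (hCm : ∀ γ x α β, Cm γ x α β = pd γ (pd β (F α)) x)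
    (Um : Pt N → Matrix (Fin N) (Fin N) ℂ)
    (hUm : ∀ x α β, Um x α β = ∑ μ, ((1 - q μ) * x μ + r μ) * pd μ (pd β (F α)) x) :
    -- C_β C_γ = C_γ C_β
    (∀ x ∈ M, ∀ β γ : Fin N, Cm β x * Cm γ x = Cm γ x * Cm β x) ∧
    -- ∂C_β/∂t^γ = ∂C_γ/∂t^β
    (∀ x ∈ M, ∀ β γ α δ' : Fin N,
      pd γ (fun y => Cm β y α δ') x = pd β (fun y => Cm γ y α δ') x) ∧
    -- [𝒰, C_β] = 0
    (∀ x ∈ M, ∀ β : Fin N, Um x * Cm β x = Cm β x * Um x) ∧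
    -- ∂𝒰/∂t^β = C_β − [Q, C_β]
    (∀ x ∈ M, ∀ β α δ' : Fin N,
      pd β (fun y => Um y α δ') x =
        (Cm β x - (Matrix.diagonal q * Cm β x - Cm β x * Matrix.diagonal q)) α δ') := by
  have hcomm : ∀ x ∈ M, ∀ β γ : Fin N, Cm β x * Cm γ x = Cm γ x * Cm β x := by
    intro x hx β γ
    ext α δ
    simp only [Matrix.mul_apply, hCm]
    exact hVP2 x hx α β γ δ
  refine ⟨hcomm, ?_, ?_, ?_⟩
  · intro x hx β γ α δ
    simp only [hCm]
    exact pd_comm γ β (analyticAt_pd δ (hFan α x hx))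
  · intro x hx β
    have hU : Um x = ∑ μ, ((1 - q μ) * x μ + r μ) • Cm μ x := by
      ext α δ
      simp [hUm, hCm, Matrix.sum_apply]
    rw [hU, Finset.sum_mul, Finset.mul_sum]
    refine Finset.sum_congr rfl fun μ _ => ?_
    rw [smul_mul_assoc, mul_smul_comm, hcomm x hx]
  · intro x hx β α δ
    have hU : ∀ y ∈ M, Um y α δ = (1 - q α + q δ) * pd δ (F α) y + A α δ := fun y hy => by
      rw [hUm]
      exact euler_pd hM (hFan α) q r (A α) (q α) (B α) (fun z hz => hconf z hz α) hy δ
    have hp : DifferentiableAt ℂ (pd δ (F α)) x :=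
      (analyticAt_pd δ (hFan α x hx)).differentiableAt
    rw [pd_congr β hM hU hx, pd_add β (hp.const_mul _) (by fun_prop), pd_mul β (by fun_prop) hp,
      pd_const, pd_const]
    simp only [Matrix.sub_apply, Matrix.diagonal_mul, Matrix.mul_diagonal, hCm]
    ring

end
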